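/- arXiv:2512.14218 — 2 statements merged into one kernel-verified Lean document; each statement's English description precedes it below -/
import Mathlib

section
/- Let d ≥ 1, 1 ≤ s < d, and let C ∈ ℝ^{d×d×d} be the core tensor. Suppose H ∈ (I_{s−1} ⊕ GL_{d−s+1})*C satisfies: (i) H_{sss} ≠ 0; (ii) H_{iss} = H_{sis} for all s ≤ i ≤ d; (iii) H_{iss} H_{sjs} = H_{ijs} H_{sss} for all 1 ≤ i ≤ d and s ≤ j ≤ d; (iv) H_{ssk} H_{sjs} = H_{jsk} H_{sss} for all s < j,k ≤ d. Define y ∈ ℝ^{d−s} by y_i = −H_{s,s+i,s}/H_{sss} for 1 ≤ i ≤ d−s. Then D^{(s, 1/H_{sss})} L^{(s,y)} * H lies in the orbit (I_s ⊕ GL_{d−s})*C. -/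
/-!
Write `c(u, w, z) = ∑ C_{αβγ} u_α w_β z_γ`, so that `H i j k = c(r_i, r_j, r_k)` where `r_i` are the
rows of `A`, and put `v = r_p`.  Conditions (ii) and (iii) give
`H i j p * H p p p = H i p p * H j p p` for `i, j ≥ p`, so the slice `H · · p` is symmetric on the
indices `≥ p`.  Since the rows `r_i` with `i ≥ p` span the coordinates `≥ p`, the bilinear form
`c(·, ·, v)` is symmetric there (`slice_symm`).  Its matrix is upper triangular because `C_{αβγ} = 0`
unless `α ≤ β ≤ γ`; hence its entries at `(p, β)`, `β > p`, vanish: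
`3 v_β + 6 ∑_{γ > β} v_γ = 0`.  Descending induction on `β` gives `v_β = 0` for `β > p`
(`row_eq_zero`), that is, `v = t e_p`.  Then `H p p p = t ^ 3` and `H p j p = t ^ 2 A_{jp}`, so the
Gauss step `D L` turns `A` into a matrix `D L A` whose row and column `p` are those of the identity,
and `D L * H = (D L A) * C`.
-/

open Matrix BigOperators

/-- The core tensor `C ∈ ℝ^{d×d×d}` (0-based indices). -/
def coreTensor (d : ℕ) : Fin d → Fin d → Fin d → ℝ := fun i j k =>
  if i = j ∧ j = k then 1
  else if (i < j ∧ j = k) ∨ (i = j ∧ j < k) then 3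
  else if i < j ∧ j < k then 6
  else 0

/-- The matrix-tensor congruence action `A * T`. -/
noncomputable def congrAct {d : ℕ} (A : Matrix (Fin d) (Fin d) ℝ)
    (T : Fin d → Fin d → Fin d → ℝ) : Fin d → Fin d → Fin d → ℝ :=
  fun i j k => ∑ α, ∑ β, ∑ γ, T α β γ * A i α * A j β * A k γ


/-- Membership in `I_s ⊕ GL_{d-s}`: an invertible matrix whose rows and columns
with (0-based) index `< s` agree with the identity matrix. -/
def IsBlockIdGL (d s : ℕ) (A : Matrix (Fin d) (Fin d) ℝ) : Prop :=
  IsUnit A ∧ ∀ i j : Fin d, ((i : ℕ) < s ∨ (j : ℕ) < s) →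
    A i j = if i = j then 1 else 0

/-- The real cube root. -/
noncomputable def cbrt (h : ℝ) : ℝ := Real.sign h * |h| ^ ((1 : ℝ) / 3)

/-- The lower Gauss matrix `L^{(p,y)} = I_d + Σ_{γ > p} y_γ E_{γp}`
(with the entries of `y` indexed by the row `γ > p` where they are placed). -/
def lowerGauss (d : ℕ) (p : Fin d) (y : Fin d → ℝ) : Matrix (Fin d) (Fin d) ℝ :=
  Matrix.of fun i j =>
    (if i = j then 1 else 0) + (if j = p ∧ p < i then y i else 0)

/-- The diagonal Gauss matrix `D^{(p,h)} = diag(1,…,1,h^{1/3},1,…,1)` with the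
real cube root of `h` at position `p`. -/
noncomputable def diagGauss (d : ℕ) (p : Fin d) (h : ℝ) : Matrix (Fin d) (Fin d) ℝ :=
  Matrix.diagonal fun i => if i = p then cbrt h else 1

lemma congrAct_mul {d : ℕ} (G A : Matrix (Fin d) (Fin d) ℝ) (T : Fin d → Fin d → Fin d → ℝ) :
    congrAct G (congrAct A T) = congrAct (G * A) T := by
  have key (x y z : Fin d → ℝ) :
      ∑ α, ∑ β, ∑ γ, congrAct A T α β γ * x α * y β * z γ =
      ∑ a, ∑ b, ∑ c, T a b c * (∑ α, x α * A α a) * (∑ β, y β * A β b) *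
        (∑ γ, z γ * A γ c) := by
    simp only [congrAct, Finset.mul_sum, Finset.sum_mul]
    -- Both sides are six-fold sums; the summation variables are regrouped through a product type.
    simp only [← Fintype.sum_prod_type']
    refine Fintype.sum_equiv
      { toFun := fun q => (q.2.2.2.1, q.2.2.2.2.1, q.2.2.2.2.2, q.2.2.1, q.2.1, q.1)
        invFun := fun q => (q.2.2.2.2.2, q.2.2.2.2.1, q.2.2.2.1, q.1, q.2.1, q.2.2.1)
        left_inv := fun q => rfl
        right_inv := fun q => rfl } _ _ ?_
    intro q
    simp
    ring
  funext i j k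
  exact key (G i) (G j) (G k)

lemma cbrt_pow_three (h : ℝ) : cbrt h ^ 3 = h := by
  have e : (|h| ^ ((1 : ℝ) / 3)) ^ 3 = |h| := by
    rw [← Real.rpow_natCast, ← Real.rpow_mul (abs_nonneg h)]
    norm_num
  unfold cbrt
  rw [mul_pow, e]
  rcases lt_trichotomy h 0 with hh | hh | hh
  · rw [Real.sign_of_neg hh, abs_of_neg hh]; ring
  · simp [hh]
  · rw [Real.sign_of_pos hh, abs_of_pos hh]; ring

lemma cbrt_inv_pow_three (t : ℝ) : cbrt (t ^ 3)⁻¹ = t⁻¹ := by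
  have hodd : Odd 3 := by decide
  apply hodd.strictMono_pow.injective
  simp only [cbrt_pow_three, inv_pow]

lemma isUnit_gauss {d : ℕ} (p : Fin d) (h : ℝ) (hh : h ≠ 0) (y : Fin d → ℝ) :
    IsUnit (diagGauss d p h * lowerGauss d p y) := by
  have hc : cbrt h ≠ 0 := by
    intro h0
    apply hh
    rw [← cbrt_pow_three h, h0]
    norm_num
  rw [Matrix.isUnit_iff_isUnit_det, Matrix.det_mul, isUnit_iff_ne_zero]
  have hL : (lowerGauss d p y).det = 1 := by
    rw [Matrix.det_of_isLowerTriangular]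
    · apply Finset.prod_eq_one
      intro i _
      simp only [lowerGauss, Matrix.of_apply, if_true]
      rw [if_neg (by rintro ⟨rfl, h⟩; exact lt_irrefl _ h), add_zero]
    · intro i j hij
      have hij : i < j := hij
      simp only [lowerGauss, Matrix.of_apply]
      rw [if_neg hij.ne, if_neg (by rintro ⟨rfl, h⟩; exact lt_asymm hij h), add_zero]
  rw [hL, mul_one, diagGauss, Matrix.det_diagonal]
  refine Finset.prod_ne_zero_iff.mpr fun i _ => ?_
  split_ifs
  · exact hc
  · exact one_ne_zero

lemma gauss_mul_apply {d : ℕ} (p : Fin d) (h : ℝ) (y : Fin d → ℝ)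
    (A : Matrix (Fin d) (Fin d) ℝ) (i j : Fin d) :
    (diagGauss d p h * lowerGauss d p y * A) i j =
      (if i = p then cbrt h else 1) * (A i j + if p < i then y i * A p j else 0) := by
  rw [Matrix.mul_assoc, diagGauss, Matrix.diagonal_mul]
  congr 1
  simp only [Matrix.mul_apply, lowerGauss, Matrix.of_apply, add_mul, Finset.sum_add_distrib,
    ite_mul, one_mul, zero_mul, ite_and]
  simp

lemma coreTensor_eq_zero {d : ℕ} {i j k : Fin d} (h : j < i ∨ k < j) :
    coreTensor d i j k = 0 := by
  unfold coreTensor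
  rw [if_neg (by rintro ⟨rfl, rfl⟩; simp at h), if_neg (by omega), if_neg (by omega)]

/-- If the slice `H · · p` of `H = A * C` is symmetric on the indices `≥ p`, then so is the matrix of
the bilinear form `c(·, ·, A p)`: the two differ by a congruence with the invertible lower block
of `A`. -/
lemma slice_symm {d : ℕ} (p : Fin d) (A : Matrix (Fin d) (Fin d) ℝ) (hA : IsBlockIdGL d p A)
    (hs : ∀ i j : Fin d, p ≤ i → p ≤ j →
      congrAct A (coreTensor d) i j p = congrAct A (coreTensor d) j i p)
    (α β : Fin d) (hα : p ≤ α) (hβ : p ≤ β) :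
    ∑ γ, coreTensor d α β γ * A p γ = ∑ γ, coreTensor d β α γ * A p γ := by
  set M : Matrix (Fin d) (Fin d) ℝ :=
    Matrix.of fun α β => ∑ γ, coreTensor d α β γ * A p γ with hM
  have hdet : IsUnit A.det := (Matrix.isUnit_iff_isUnit_det A).mp hA.1
  have hN (i j : Fin d) : (A * M * Aᵀ) i j = congrAct A (coreTensor d) i j p := by
    simp only [Matrix.mul_apply, Matrix.transpose_apply, congrAct, hM, Matrix.of_apply,
      Finset.sum_mul, Finset.mul_sum]
    rw [Finset.sum_comm]
    refine Finset.sum_congr rfl fun a _ => Finset.sum_congr rfl fun b _ =>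
      Finset.sum_congr rfl fun c _ => by ring
  have hB (a i : Fin d) (ha : p ≤ a) (hi : i < p) : A⁻¹ a i = 0 := by
    have e : (A⁻¹ * A) a i = A⁻¹ a i := by
      rw [Matrix.mul_apply, Finset.sum_eq_single i]
      · rw [hA.2 i i (Or.inl hi)]; simp
      · intro k _ hk
        rw [hA.2 k i (Or.inr hi), if_neg hk, mul_zero]
      · simp
    rw [← e, Matrix.nonsing_inv_mul _ hdet, Matrix.one_apply_ne (by omega)]
  have hMN : M = A⁻¹ * (A * M * Aᵀ) * (A⁻¹)ᵀ := by
    have e : Aᵀ * (A⁻¹)ᵀ = 1 := by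
      rw [← Matrix.transpose_mul, Matrix.nonsing_inv_mul _ hdet, Matrix.transpose_one]
    rw [Matrix.mul_assoc, Matrix.mul_assoc (A * M), e, Matrix.mul_one, ← Matrix.mul_assoc,
      Matrix.nonsing_inv_mul _ hdet, Matrix.one_mul]
  have hentry (a b : Fin d) :
      M a b = ∑ j, ∑ i, A⁻¹ a i * congrAct A (coreTensor d) i j p * A⁻¹ b j := by
    conv_lhs => rw [hMN]
    rw [Matrix.mul_apply]
    refine Finset.sum_congr rfl fun j _ => ?_
    rw [Matrix.mul_apply, Finset.sum_mul]
    simp only [hN, Matrix.transpose_apply]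
  change M α β = M β α
  rw [hentry, hentry, Finset.sum_comm]
  refine Finset.sum_congr rfl fun i _ => Finset.sum_congr rfl fun j _ => ?_
  by_cases hi : i < p
  · simp [hB _ _ hα hi]
  by_cases hj : j < p
  · simp [hB _ _ hβ hj]
  rw [hs i j (not_lt.mp hi) (not_lt.mp hj)]
  ring

lemma row_eq_zero {d : ℕ} (p : Fin d) (v : Fin d → ℝ)
    (hs : ∀ β : Fin d, p < β →
      ∑ γ, coreTensor d p β γ * v γ = ∑ γ, coreTensor d β p γ * v γ)
    (β : Fin d) (hβ : p < β) : v β = 0 := by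
  induction β using WellFoundedGT.induction with
  | ind β ih =>
    have e := hs β hβ
    rw [Finset.sum_eq_zero (s := Finset.univ) (f := fun γ => coreTensor d β p γ * v γ)
      (fun γ _ => by rw [coreTensor_eq_zero (Or.inl hβ), zero_mul]),
      Finset.sum_eq_single β] at e
    · have h3 : coreTensor d p β β = 3 := by
        unfold coreTensor
        rw [if_neg (by omega), if_pos (Or.inl ⟨hβ, rfl⟩)]
      rw [h3] at e
      linarith
    · intro γ _ hγ
      rcases lt_or_gt_of_ne hγ with h | h
      · rw [coreTensor_eq_zero (Or.inr h), zero_mul]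
      · rw [ih γ h (hβ.trans h), mul_zero]
    · simp

theorem stmt3 (d : ℕ) (p : Fin d) (hp : (p : ℕ) + 1 < d)
    (H : Fin d → Fin d → Fin d → ℝ)
    (hH : ∃ A : Matrix (Fin d) (Fin d) ℝ,
      IsBlockIdGL d (p : ℕ) A ∧ H = congrAct A (coreTensor d))
    (h1 : H p p p ≠ 0)
    (h2 : ∀ i : Fin d, p ≤ i → H i p p = H p i p)
    (h3 : ∀ i j : Fin d, p ≤ j → H i p p * H p j p = H i j p * H p p p)
    (h4 : ∀ j k : Fin d, p < j → p < k → H p p k * H p j p = H j p k * H p p p) :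
    ∃ A : Matrix (Fin d) (Fin d) ℝ, IsBlockIdGL d ((p : ℕ) + 1) A ∧
      congrAct
        (diagGauss d p (H p p p)⁻¹ * lowerGauss d p (fun γ => -(H p γ p) / H p p p)) H
        = congrAct A (coreTensor d) := by
  obtain ⟨A, hA, rfl⟩ := hH
  set H := congrAct A (coreTensor d) with hHdef
  have hs : ∀ i j : Fin d, p ≤ i → p ≤ j → H i j p = H j i p := by
    intro i j hi hj
    apply mul_right_cancel₀ h1
    rw [← h3 i j hj, ← h3 j i hi, h2 i hi, h2 j hj]
    ring
  have hv : ∀ γ, p < γ → A p γ = 0 :=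
    row_eq_zero p (A p) fun β hβ => slice_symm p A hA hs p β le_rfl hβ.le
  have hrow : ∀ γ, γ ≠ p → A p γ = 0 := by
    intro γ hγ
    rcases lt_or_gt_of_ne hγ with h | h
    · rw [hA.2 p γ (Or.inr h), if_neg hγ.symm]
    · exact hv γ h
  have hHp : ∀ j, H p j p = A p p ^ 2 * A j p := by
    intro j
    simp only [hHdef, congrAct]
    rw [Finset.sum_eq_single p, Finset.sum_eq_single p, Finset.sum_eq_single p]
    · simp [coreTensor]; ring
    · intro c _ hc; rw [hrow c hc, mul_zero]
    · simp
    · intro b _ hb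
      refine Finset.sum_eq_zero fun c _ => ?_
      by_cases hc : c = p
      · -- `C_{pbp} = 0` for `b ≠ p`, since `p ≤ b ≤ p` fails.
        subst hc
        rw [coreTensor_eq_zero (by omega)]
        simp
      · rw [hrow c hc, mul_zero]
    · simp
    · intro a _ ha
      refine Finset.sum_eq_zero fun b _ => Finset.sum_eq_zero fun c _ => ?_
      rw [hrow a ha]
      simp
    · simp
  have hppp : H p p p = A p p ^ 3 := by rw [hHp]; ring
  have ht : A p p ≠ 0 := by
    intro h0
    apply h1
    rw [hppp, h0]
    norm_num
  refine ⟨diagGauss d p (H p p p)⁻¹ * lowerGauss d p (fun γ => -(H p γ p) / H p p p) * A,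
    ⟨(isUnit_gauss p _ (inv_ne_zero h1) _).mul hA.1, ?_⟩, congrAct_mul _ _ _⟩
  intro i j hij
  rw [gauss_mul_apply, hppp, cbrt_inv_pow_three, hHp]
  rcases lt_trichotomy i p with hi | rfl | hi
  · rw [if_neg hi.ne, if_neg hi.not_gt, hA.2 i j (Or.inl hi)]
    ring
  · rw [if_pos rfl, if_neg (lt_irrefl _), add_zero]
    by_cases hj : j = i
    · subst hj
      simp [ht]
    · rw [hrow j hj, if_neg (Ne.symm hj), mul_zero]
  · rw [if_neg hi.ne', if_pos hi]
    by_cases hj : j = p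
    · subst hj
      rw [if_neg hi.ne']
      field_simp
      ring
    · have hj' : j < p := by omega
      rw [hrow j hj, hA.2 i j (Or.inr hj')]
      ring
end

section
/- Let d ≥ 1, 1 ≤ s ≤ d, and let C ∈ ℝ^{d×d×d} be the core tensor. If G ∈ (I_{s−1} ⊕ GL_{d−s+1})*C, then there exists an index s ≤ t ≤ d such that G_{ttt} ≠ 0. -/
/-!
The cubic form of the core tensor is a perfect cube: the six index permutations of `coreTensor`
add up to the constant tensor `6`, so `∑ C_{αβγ} x_α x_β x_γ = (∑ x_α)³`. Hence `G_{ttt}` is the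
cube of the `t`-th row sum of `A`. If all these vanished in the `GL` block, the indicator vector of
that block, which is nonzero, would lie in the kernel of the invertible matrix `A`.
-/

open Matrix BigOperators

lemma coreTensor_symm_sum (d : ℕ) (a b c : Fin d) :
    coreTensor d a b c + coreTensor d a c b + coreTensor d b a c + coreTensor d b c a
      + coreTensor d c a b + coreTensor d c b a = 6 := by
  rcases lt_trichotomy a b with h | h | h <;> rcases lt_trichotomy b c with h' | h' | h' <;>
  rcases lt_trichotomy a c with h'' | h'' | h'' <;>
  grind [coreTensor]

lemma coreTensor_cubic_form (d : ℕ) (x : Fin d → ℝ) :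
    ∑ a, ∑ b, ∑ c, coreTensor d a b c * x a * x b * x c = (∑ a, x a) ^ 3 := by
  -- The two adjacent transpositions of summation indices generate all six permutations.
  have swap₁ : ∀ f : Fin d → Fin d → Fin d → ℝ,
      ∑ a, ∑ b, ∑ c, f b a c = ∑ a, ∑ b, ∑ c, f a b c := fun f => Finset.sum_comm
  have swap₂ : ∀ f : Fin d → Fin d → Fin d → ℝ,
      ∑ a, ∑ b, ∑ c, f a c b = ∑ a, ∑ b, ∑ c, f a b c :=
    fun f => Finset.sum_congr rfl fun a _ => Finset.sum_comm
  let f : Fin d → Fin d → Fin d → ℝ := fun a b c => coreTensor d a b c * x a * x b * x c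
  have h₁ := swap₂ f
  have h₂ := swap₁ f
  have h₃ : ∑ a, ∑ b, ∑ c, f b c a = ∑ a, ∑ b, ∑ c, f a b c :=
    (swap₁ fun a b c => f a c b).trans h₁
  have h₄ : ∑ a, ∑ b, ∑ c, f c a b = ∑ a, ∑ b, ∑ c, f a b c :=
    (swap₂ fun a b c => f b a c).trans h₂
  have h₅ : ∑ a, ∑ b, ∑ c, f c b a = ∑ a, ∑ b, ∑ c, f a b c :=
    (swap₂ fun a b c => f b c a).trans h₃
  have hcube : (∑ a, x a) ^ 3 = ∑ a, ∑ b, ∑ c, x a * x b * x c := by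
    simp only [pow_succ, pow_zero, one_mul, Finset.sum_mul, Finset.mul_sum]
    exact Finset.sum_congr rfl fun a _ => Finset.sum_congr rfl fun b _ =>
      Finset.sum_congr rfl fun c _ => by ring
  have hsix : ∑ a, ∑ b, ∑ c, (f a b c + f a c b + f b a c + f b c a + f c a b + f c b a)
      = 6 * ∑ a, ∑ b, ∑ c, x a * x b * x c := by
    simp only [Finset.mul_sum]
    refine Finset.sum_congr rfl fun a _ => Finset.sum_congr rfl fun b _ =>
      Finset.sum_congr rfl fun c _ => ?_
    simp only [f]
    linear_combination (x a * x b * x c) * coreTensor_symm_sum d a b c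
  simp only [Finset.sum_add_distrib] at hsix
  change ∑ a, ∑ b, ∑ c, f a b c = _
  linarith

theorem stmt9 (d s : ℕ) (hs : 1 ≤ s) (hsd : s ≤ d)
    (G : Fin d → Fin d → Fin d → ℝ)
    (hG : ∃ A : Matrix (Fin d) (Fin d) ℝ,
      IsBlockIdGL d (s - 1) A ∧ G = congrAct A (coreTensor d)) :
    ∃ t : Fin d, s - 1 ≤ (t : ℕ) ∧ G t t t ≠ 0 := by
  obtain ⟨A, ⟨hA, hblock⟩, rfl⟩ := hG
  have hlt : s - 1 < d := by omega
  generalize s - 1 = r at *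
  by_contra! hzero
  have hrow : ∀ t : Fin d, r ≤ (t : ℕ) → ∑ j, A t j = 0 := fun t ht =>
    pow_eq_zero_iff (three_ne_zero) |>.mp ((coreTensor_cubic_form d (A t)).symm.trans (hzero t ht))
  let v : Fin d → ℝ := fun j => if r ≤ (j : ℕ) then 1 else 0
  have hv : A *ᵥ v = A *ᵥ 0 := by
    rw [Matrix.mulVec_zero]
    funext t
    simp only [Matrix.mulVec, dotProduct, Pi.zero_apply]
    by_cases ht : r ≤ (t : ℕ)
    · rw [← hrow t ht]
      refine Finset.sum_congr rfl fun j _ => ?_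
      by_cases hj : r ≤ (j : ℕ)
      · simp [v, hj]
      · have htj : t ≠ j := by rintro rfl; exact hj ht
        simp [v, hj, hblock t j (Or.inr (not_le.mp hj)), htj]
    · refine Finset.sum_eq_zero fun j _ => ?_
      by_cases hj : r ≤ (j : ℕ)
      · have htj : t ≠ j := by rintro rfl; exact ht hj
        simp [hblock t j (Or.inl (not_le.mp ht)), htj]
      · simp [v, hj]
  have hv0 : v = 0 := Matrix.mulVec_injective_of_isUnit hA hv
  simpa [v] using congrFun hv0 ⟨r, hlt⟩
end
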